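/- arXiv:1101.4931 — 3 statements merged into one kernel-verified Lean document; each statement's English description precedes it below -/
import Mathlib

section
/- Let 0 < q < 1 be a real number and define the q-Hermite numbers H_{n,q}(x) = n! * \sum_{l=0}^{\lfloor n/2 \rfloor} (-1)^l * 2^{n-2l} * [x]_q^{n-2l} / (l! * (n-2l)!). Then for all real x and all real t, the series \sum_{n=0}^{\infty} H_{n,q}(x) * t^n / n! converges with sum equal to exp(2*t*[x]_q - t^2). (This is the paper's Theorem 1, asserting that these explicit polynomials are exactly the coefficients in the generating function e^{2t[x]_q - t^2} = \sum_{n\ge 0} H_{n,q}(x) t^n/n!.) -/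
open Real

/-- The `q`-number of a real number `y`: `[y]_q = (1 - q^y)/(1 - q)`. -/
noncomputable def qNum (q y : ℝ) : ℝ := (1 - q ^ y) / (1 - q)

/-- The `q`-Hermite polynomial
`H_{n,q}(x) = n! * ∑_{l=0}^{⌊n/2⌋} (-1)^l 2^(n-2l) [x]_q^(n-2l) / (l! (n-2l)!)`. -/
noncomputable def qHermite (q : ℝ) (n : ℕ) (x : ℝ) : ℝ :=
  (Nat.factorial n : ℝ) * ∑ l ∈ Finset.range (n / 2 + 1),
    (-1 : ℝ) ^ l * 2 ^ (n - 2 * l) * (qNum q x) ^ (n - 2 * l) / ((Nat.factorial l : ℝ) * (Nat.factorial (n - 2 * l) : ℝ))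

/-!
The exponential `exp (2ta - t²)` is the product of `exp (-t²) = ∑ (-t²)^l / l!` and
`exp (2ta) = ∑ (2ta)^m / m!`. Since both series converge absolutely, their product may be summed
along the lines `2l + m = n`, each of which contains only finitely many pairs `(l, m)`. The terms
with `2l + m = n` are exactly those of degree `n` in `t`, and they add up to `t^n / n!` times the
`n`-th Hermite polynomial at `a`.
-/

section WeightedCauchyProduct

variable (k : ℕ) [NeZero k]

theorem mem_range_div_succ_iff {l n : ℕ} : l ∈ Finset.range (n / k + 1) ↔ k * l ≤ n := by
  rw [Finset.mem_range_succ_iff, Nat.le_div_iff_mul_le (NeZero.pos k), mul_comm]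

/-- The grading of the pairs `(l, m)` of natural numbers by the weighted degree `n = k * l + m`.
The pairs of degree `n` are encoded by `l`, which ranges over `0, …, ⌊n / k⌋`. -/
def sigmaRangeDivEquivProd : (Σ n : ℕ, Finset.range (n / k + 1)) ≃ ℕ × ℕ where
  toFun p := (p.2, p.1 - k * p.2)
  invFun p := ⟨k * p.1 + p.2, p.1, (mem_range_div_succ_iff k).mpr (Nat.le_add_right ..)⟩
  left_inv := by
    rintro ⟨n, l, hl⟩
    exact Sigma.subtype_ext (Nat.add_sub_cancel' ((mem_range_div_succ_iff k).mp hl)) rfl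
  right_inv _ := Prod.ext rfl (Nat.add_sub_cancel_left ..)

theorem hasSum_sum_range_div {M : Type*} [AddCommMonoid M] [TopologicalSpace M] [ContinuousAdd M]
    [RegularSpace M] {f : ℕ × ℕ → M} {s : M} (hf : HasSum f s) :
    HasSum (fun n ↦ ∑ l ∈ Finset.range (n / k + 1), f (l, n - k * l)) s :=
  ((sigmaRangeDivEquivProd k).hasSum_iff.mpr hf).sigma fun n ↦
    (Finset.range (n / k + 1)).hasSum fun l ↦ f (l, n - k * l)

theorem hasSum_sum_range_div_mul_of_summable_norm {R : Type*} [NormedRing R]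
    {f g : ℕ → R} {a b : R} (hf : HasSum f a) (hg : HasSum g b)
    (hf' : Summable fun n ↦ ‖f n‖) (hg' : Summable fun n ↦ ‖g n‖) :
    HasSum (fun n ↦ ∑ l ∈ Finset.range (n / k + 1), f l * g (n - k * l)) (a * b) :=
  hasSum_sum_range_div k (f := fun p ↦ f p.1 * g p.2) <|
    hf.mul hg (summable_mul_of_summable_norm' hf' hf.summable hg' hg.summable)

theorem hasSum_sum_range_div_exp_add {K : Type*} [NormedField K] [NormedAlgebra ℚ K]
    [CompleteSpace K] (x y : K) :
    HasSum (fun n ↦ ∑ l ∈ Finset.range (n / k + 1),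
      x ^ l / l.factorial * (y ^ (n - k * l) / (n - k * l).factorial))
      (NormedSpace.exp (x + y)) := by
  rw [NormedSpace.exp_add]
  exact hasSum_sum_range_div_mul_of_summable_norm k (g := fun m ↦ y ^ m / m.factorial)
    (NormedSpace.expSeries_div_hasSum_exp x) (NormedSpace.expSeries_div_hasSum_exp y)
    (NormedSpace.norm_expSeries_div_summable x) (NormedSpace.norm_expSeries_div_summable y)

end WeightedCauchyProduct

/-- The value at `a` of the `n`-th Hermite polynomial, in the physicists' normalization (leading
coefficient `2 ^ n`). Mathlib's `Polynomial.hermite` is the probabilists' one. -/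
def physicistsHermite {K : Type*} [Field K] (n : ℕ) (a : K) : K :=
  n.factorial * ∑ l ∈ Finset.range (n / 2 + 1),
    (-1) ^ l * 2 ^ (n - 2 * l) * a ^ (n - 2 * l) / (l.factorial * (n - 2 * l).factorial)

theorem qHermite_eq_physicistsHermite (q : ℝ) (n : ℕ) (x : ℝ) :
    qHermite q n x = physicistsHermite n (qNum q x) :=
  rfl

theorem physicistsHermite_mul_pow_div_factorial {K : Type*} [Field K] [CharZero K] (n : ℕ)
    (a t : K) :
    physicistsHermite n a * t ^ n / n.factorial =
      ∑ l ∈ Finset.range (n / 2 + 1),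
        (-t ^ 2) ^ l / l.factorial * ((2 * t * a) ^ (n - 2 * l) / (n - 2 * l).factorial) := by
  have hn : (n.factorial : K) ≠ 0 := Nat.cast_ne_zero.mpr n.factorial_ne_zero
  rw [physicistsHermite, mul_assoc, mul_div_cancel_left₀ _ hn, Finset.sum_mul]
  refine Finset.sum_congr rfl fun l hl ↦ ?_
  have hln : 2 * l ≤ n := (mem_range_div_succ_iff 2).mp hl
  have ht : t ^ n = (t ^ 2) ^ l * t ^ (n - 2 * l) := by
    rw [← pow_mul, ← pow_add, Nat.add_sub_cancel' hln]
  rw [ht, neg_pow (t ^ 2), mul_pow (2 * t), mul_pow 2 t]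
  ring

theorem qHermite_hasSum_general {K : Type*} [NormedField K] [NormedAlgebra ℚ K] [CompleteSpace K]
    (a t : K) :
    HasSum (fun n : ℕ ↦ physicistsHermite n a * t ^ n / n.factorial)
      (NormedSpace.exp (2 * t * a - t ^ 2)) := by
  have : CharZero K := algebraRat.charZero K
  simp_rw [physicistsHermite_mul_pow_div_factorial, sub_eq_neg_add]
  exact hasSum_sum_range_div_exp_add 2 (-t ^ 2) (2 * t * a)

/-- Theorem 1 of the paper: the explicit `q`-Hermite polynomials are exactly the
coefficients in the generating function `e^{2t[x]_q - t^2} = ∑ H_{n,q}(x) t^n/n!`. -/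
theorem qHermite_hasSum (q : ℝ) (hq0 : 0 < q) (hq1 : q < 1) (x t : ℝ) :
    HasSum (fun n : ℕ => qHermite q n x * t ^ n / (Nat.factorial n : ℝ))
      (Real.exp (2 * t * qNum q x - t ^ 2)) := by
  simp_rw [qHermite_eq_physicistsHermite, Real.exp_eq_exp_ℝ]
  exact qHermite_hasSum_general (qNum q x) t
end

section
/- Let 0 < q < 1, let x be in the interval [0,1], and let k be a nonnegative integer. Then for every real t, the series \sum_{n=k}^{\infty} B_{k,n}(x | q) * t^n / n! converges with sum (t*[x]_q)^k * exp(t*[1-x]_{1/q}) / k!, where B_{k,n}(x | q) = C(n,k) * [x]_q^k * [1-x]_{1/q}^{n-k}. -/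
open Real

/-- The `q`-Bernstein polynomial `B_{k,n}(x | q) = C(n,k) [x]_q^k [1-x]_{1/q}^{n-k}`. -/
noncomputable def qBernstein (q : ℝ) (k n : ℕ) (x : ℝ) : ℝ :=
  (n.choose k : ℝ) * (qNum q x) ^ k * (qNum (1 / q) (1 - x)) ^ (n - k)

section

open scoped Nat

variable {K : Type*} [Semifield K] [CharZero K]

theorem natCast_choose_div_factorial {n k : ℕ} (hkn : k ≤ n) :
    (n.choose k : K) / n ! = 1 / (k ! * (n - k)!) := by
  have hn : (n ! : K) ≠ 0 := mod_cast n.factorial_ne_zero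
  rw [Nat.cast_choose K hkn, div_right_comm, div_self hn]

theorem hasSum_choose_mul_shift_mul_pow_div_factorial [TopologicalSpace K]
    [IsTopologicalSemiring K] {c : ℕ → K} {t s : K}
    (hc : HasSum (fun m ↦ c m * t ^ m / m !) s) (k : ℕ) :
    HasSum (fun n ↦ n.choose k * c (n - k) * t ^ n / n !) (t ^ k / k ! * s) := by
  have vanish_below (n : ℕ) (hn : n ∉ Set.range (· + k)) :
      (n.choose k * c (n - k) * t ^ n / n ! : K) = 0 := by
    have hnk : n < k := by
      contrapose! hn
      exact ⟨n - k, Nat.sub_add_cancel hn⟩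
    simp [Nat.choose_eq_zero_of_lt hnk]
  have shifted_term (m : ℕ) :
      ((m + k).choose k * c (m + k - k) * t ^ (m + k) / (m + k)! : K) =
        t ^ k / k ! * (c m * t ^ m / m !) := by
    rw [mul_assoc, mul_div_right_comm, natCast_choose_div_factorial (Nat.le_add_left k m),
      Nat.add_sub_cancel]
    ring
  rw [← (add_left_injective k).hasSum_iff vanish_below]
  simpa only [Function.comp_def, shifted_term] using hc.mul_left (t ^ k / (k ! : K))

theorem hasSum_choose_mul_pow_mul_pow_sub_mul_pow_div_factorial {𝕜 : Type*} [NormedField 𝕜]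
    [NormedAlgebra ℚ 𝕜] [CompleteSpace 𝕜] (a b t : 𝕜) (k : ℕ) :
    HasSum (fun n ↦ n.choose k * a ^ k * b ^ (n - k) * t ^ n / n !)
      ((t * a) ^ k * NormedSpace.exp (t * b) / k !) := by
  have : CharZero 𝕜 := algebraRat.charZero 𝕜
  have exp_series : HasSum (fun m ↦ b ^ m * t ^ m / m !) (NormedSpace.exp (t * b)) := by
    simpa only [mul_pow, mul_comm] using NormedSpace.expSeries_div_hasSum_exp (t * b)
  convert! (hasSum_choose_mul_shift_mul_pow_div_factorial exp_series k).mul_left (a ^ k) using 1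
  · ext n
    ring
  · ring

end

theorem qBernstein_hasSum_general (q : ℝ) (hq0 : 0 < q) (hq1 : q ≠ 1) (x : ℝ) (k : ℕ) (t : ℝ) :
    HasSum (fun n : ℕ => qBernstein q k n x * t ^ n / (Nat.factorial n : ℝ))
      ((t * qNum q x) ^ k * Real.exp (t * qNum (1 / q) (1 - x)) / (Nat.factorial k : ℝ)) := by
  rw [Real.exp_eq_exp_ℝ]
  exact hasSum_choose_mul_pow_mul_pow_sub_mul_pow_div_factorial
    (qNum q x) (qNum (1 / q) (1 - x)) t k

/-- The generating function of the `q`-Bernstein polynomials: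
`∑_{n≥k} B_{k,n}(x|q) t^n/n! = (t[x]_q)^k e^{t[1-x]_{1/q}} / k!`.
(The terms with `n < k` vanish since then `C(n,k) = 0`.) -/
theorem qBernstein_hasSum (q : ℝ) (hq0 : 0 < q) (hq1 : q < 1)
    (x : ℝ) (hx : x ∈ Set.Icc (0 : ℝ) 1) (k : ℕ) (t : ℝ) :
    HasSum (fun n : ℕ => qBernstein q k n x * t ^ n / (Nat.factorial n : ℝ))
      ((t * qNum q x) ^ k * Real.exp (t * qNum (1 / q) (1 - x)) / (Nat.factorial k : ℝ)) :=
  qBernstein_hasSum_general q hq0 hq1.ne x k t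
end

section
/- Let 0 < q < 1, let x be in the interval [0,1], and let k be a nonnegative integer. Then for every real t, the series \sum_{n=0}^{\infty} (1 - (-1)^n) * (B_{k,n+k}(x | q) / C(n+k,k)) * t^n / n! converges with sum 2 * [x]_q^k * sinh(t * [1-x]_{1/q}). (This is identity (12) in the paper.) -/
open Real

theorem hasSum_exp_sub_exp_neg {𝔸 : Type*} [NormedDivisionRing 𝔸] [NormedAlgebra ℚ 𝔸]
    [CompleteSpace 𝔸] (y : 𝔸) :
    HasSum (fun n : ℕ => (1 - (-1) ^ n) * (y ^ n / (Nat.factorial n : 𝔸)))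
      (NormedSpace.exp y - NormedSpace.exp (-y)) := by
  refine ((NormedSpace.expSeries_div_hasSum_exp y).sub
    (NormedSpace.expSeries_div_hasSum_exp (-y))).congr_fun fun n => ?_
  rw [neg_pow y n, mul_div_assoc, sub_mul, one_mul]

theorem hasSum_two_mul_sinh (y : ℝ) :
    HasSum (fun n : ℕ => (1 - (-1) ^ n) * (y ^ n / (Nat.factorial n : ℝ))) (2 * Real.sinh y) := by
  rw [Real.sinh_eq, mul_div_cancel₀ _ two_ne_zero, Real.exp_eq_exp_ℝ]
  exact hasSum_exp_sub_exp_neg y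

theorem qBernstein_div_choose (q x : ℝ) {k n : ℕ} (hkn : k ≤ n) :
    qBernstein q k n x / (n.choose k : ℝ) = qNum q x ^ k * qNum (1 / q) (1 - x) ^ (n - k) := by
  have choose_ne_zero : (n.choose k : ℝ) ≠ 0 := Nat.cast_ne_zero.mpr (Nat.choose_ne_zero hkn)
  rw [qBernstein, mul_assoc, mul_div_cancel_left₀ _ choose_ne_zero]

theorem qBernstein_sinh_hasSum_general (q x : ℝ) (k : ℕ) (t : ℝ) :
    HasSum (fun n : ℕ =>
        (1 - (-1 : ℝ) ^ n) * (qBernstein q k (n + k) x / ((n + k).choose k : ℝ)) * t ^ n /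
          (Nat.factorial n : ℝ))
      (2 * (qNum q x) ^ k * Real.sinh (t * qNum (1 / q) (1 - x))) := by
  rw [mul_comm 2, mul_assoc]
  refine ((hasSum_two_mul_sinh (t * qNum (1 / q) (1 - x))).mul_left (qNum q x ^ k)).congr_fun
    fun n => ?_
  rw [qBernstein_div_choose q x (Nat.le_add_left k n), Nat.add_sub_cancel, mul_pow]
  ring

/-- Identity (12) of the paper:
`∑_{n≥0} (1 - (-1)^n) (B_{k,n+k}(x|q) / C(n+k,k)) t^n/n! = 2 [x]_q^k sinh(t [1-x]_{1/q})`. -/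
theorem qBernstein_sinh_hasSum (q : ℝ) (hq0 : 0 < q) (hq1 : q < 1)
    (x : ℝ) (hx : x ∈ Set.Icc (0 : ℝ) 1) (k : ℕ) (t : ℝ) :
    HasSum (fun n : ℕ =>
        (1 - (-1 : ℝ) ^ n) * (qBernstein q k (n + k) x / ((n + k).choose k : ℝ)) * t ^ n / (Nat.factorial n : ℝ))
      (2 * (qNum q x) ^ k * Real.sinh (t * qNum (1 / q) (1 - x))) :=
  qBernstein_sinh_hasSum_general q x k t
end
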